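/- arXiv:2202.01551 — 2 statements merged into one kernel-verified Lean document; each statement's English description precedes it below -/
import Mathlib

section
/- Assume that either H_i ≠ {0} for all i ∈ Ω or P is hierarchical. Then there exists a unique map ζ : G → T such that for every φ ∈ G one has ⟨supp(φ(α))⟩_P = ζ(φ)[⟨supp(α)⟩_P] for all α ∈ H. Moreover, ζ is a group homomorphism, ζ is surjective onto T, and the kernel of ζ equals GL_P(H), the group of S-module automorphisms of H satisfying ⟨supp(φ(α))⟩_P = ⟨supp(α)⟩_P for all α ∈ H. -/
def idl {Ω : Type*} [PartialOrder Ω] (B : Set Ω) : Set Ω := {a | ∃ b ∈ B, a ≤ b}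

def IsIdl {Ω : Type*} [PartialOrder Ω] (I : Set Ω) : Prop := ∀ a b : Ω, a ≤ b → b ∈ I → a ∈ I

noncomputable def lenP {Ω : Type*} [PartialOrder Ω] (y : Ω) : ℕ :=
  sSup {n : ℕ | ∃ c : Finset Ω, IsChain (· ≤ ·) (c : Set Ω) ∧ y ∈ c ∧ (∀ x ∈ c, x ≤ y) ∧ c.card = n}

def Hierarchical (Ω : Type*) [PartialOrder Ω] : Prop :=
  ∀ u v : Ω, lenP u + 1 ≤ lenP v → u ≤ v

def hsupp {Ω : Type*} {H : Ω → Type*} [∀ i, Zero (H i)] (β : ∀ i, H i) : Set Ω :=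
  {i | β i ≠ 0}

/-- `K` is the set of indices with nonzero component module. -/
def Kset {Ω : Type*} (H : Ω → Type*) [∀ i, Zero (H i)] : Set Ω := {i | ∃ x : H i, x ≠ 0}

/-- The subgroup `T` of order automorphisms of the poset. -/
def Tpred (S : Type*) [Ring S] {Ω : Type*} [PartialOrder Ω] (H : Ω → Type*)
    [∀ i, AddCommGroup (H i)] [∀ i, Module S (H i)] {Y : Type*} (ϖ : Set Ω → Y)
    (μ : Ω ≃o Ω) : Prop :=
  (∀ i ∉ Kset H, μ i = i) ∧ (∀ I : Set Ω, I ⊆ Kset H → ϖ (μ '' I) = ϖ I) ∧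
    ∀ i : Ω, Nonempty (H i ≃ₗ[S] H (μ i))

/-- The group `G` of `S`-module automorphisms of `H` preserving `ϖ ∘ supp`. -/
def Gpred (S : Type*) [Ring S] {Ω : Type*} (H : Ω → Type*)
    [∀ i, AddCommGroup (H i)] [∀ i, Module S (H i)] {Y : Type*} (ϖ : Set Ω → Y)
    (φ : (∀ i, H i) ≃ₗ[S] (∀ i, H i)) : Prop :=
  ∀ α : ∀ i, H i, ϖ (hsupp (φ α)) = ϖ (hsupp α)

def GLPsupp (S : Type*) [Ring S] {Ω : Type*} [PartialOrder Ω] (H : Ω → Type*)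
    [∀ i, AddCommGroup (H i)] [∀ i, Module S (H i)]
    (φ : (∀ i, H i) ≃ₗ[S] (∀ i, H i)) : Prop :=
  ∀ α : ∀ i, H i, idl (hsupp (φ α)) = idl (hsupp α)

/-!
If the support of a vector has a greatest element `i`, its weight is `ϖ {i}`; by (3.3) the converse
holds whenever `i` lies in the ideal generated by the support. Write `a` in `H i` as the sum of the
preimages under `φ` of the coordinates of its image: one of them, say the `j`-th, contributes to the
coordinate `i`, and antisymmetry of `r` then forces `ϖ {i} = ϖ {j}`. Hence `j` is the greatest
element of the support of the image of `a`. It depends on `i` only, not on `a`, and `i ↦ j` is an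
order automorphism of `K` whose inverse is obtained from `φ⁻¹`.

If `P` is hierarchical, an order automorphism of `K` preserves `lenP`, because a strictly monotone
self-map of a finite poset moves no point strictly up; so it extends by the identity to all of `Ω`.
The resulting `μ` describes the leading coordinate of `φ` on each component, which gives both the
action of `φ` on generated ideals and isomorphisms from `H i` to `H (μ i)`.
-/

section Order

variable {α β : Type*} [PartialOrder α] [PartialOrder β]

theorem subset_idl (B : Set α) : B ⊆ idl B := fun b hb => ⟨b, hb, le_rfl⟩

theorem isIdl_idl (B : Set α) : IsIdl (idl B) := by
  rintro a b hab ⟨c, hc, hbc⟩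
  exact ⟨c, hc, hab.trans hbc⟩

theorem idl_mono {B C : Set α} (h : B ⊆ C) : idl B ⊆ idl C :=
  fun _ ⟨b, hb, hab⟩ => ⟨b, h hb, hab⟩

theorem idl_image (μ : α ≃o β) (B : Set α) : idl (μ '' B) = μ '' idl B := by
  ext x
  constructor
  · rintro ⟨_, ⟨b, hb, rfl⟩, hx⟩
    exact ⟨μ.symm x, ⟨b, hb, by rwa [μ.symm_apply_le]⟩, μ.apply_symm_apply x⟩
  · rintro ⟨y, ⟨b, hb, hy⟩, rfl⟩
    exact ⟨μ b, ⟨b, hb, rfl⟩, μ.monotone hy⟩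

theorem idl_eq_idl_singleton_iff {B : Set α} {u : α} : idl B = idl {u} ↔ IsGreatest B u := by
  constructor
  · intro h
    have le_u : ∀ b ∈ B, b ≤ u := by
      intro b hb
      obtain ⟨_, rfl, hbu⟩ := h ▸ subset_idl B hb
      exact hbu
    obtain ⟨b, hb, hub⟩ : u ∈ idl B := h ▸ subset_idl {u} rfl
    exact ⟨le_antisymm hub (le_u b hb) ▸ hb, le_u⟩
  · rintro ⟨hu, le_u⟩
    refine Set.Subset.antisymm ?_ (idl_mono (Set.singleton_subset_iff.2 hu))
    rintro x ⟨b, hb, hxb⟩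
    exact ⟨u, rfl, hxb.trans (le_u hb)⟩

theorem not_lt_apply_of_strictMono {γ : Type*} [Preorder γ] [Finite γ] {f : γ → γ}
    (hf : StrictMono f) (x : γ) : ¬ x < f x := fun hx =>
  not_injective_infinite_finite _ (hf.strictMono_iterate_of_lt_map hx).injective

theorem bddAbove_card_chain [Finite α] (y : α) :
    BddAbove {n : ℕ | ∃ c : Finset α,
      IsChain (· ≤ ·) (c : Set α) ∧ y ∈ c ∧ (∀ x ∈ c, x ≤ y) ∧ c.card = n} := by
  cases nonempty_fintype α
  refine ⟨Fintype.card α, ?_⟩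
  rintro n ⟨c, -, -, -, rfl⟩
  exact Finset.card_le_univ c

theorem exists_chain_card_eq_lenP [Finite α] (y : α) : ∃ c : Finset α,
    IsChain (· ≤ ·) (c : Set α) ∧ y ∈ c ∧ (∀ x ∈ c, x ≤ y) ∧ c.card = lenP y := by
  refine Nat.sSup_mem ?_ (bddAbove_card_chain y)
  exact ⟨1, {y}, by simp⟩

theorem lenP_strictMono [Finite α] : StrictMono (lenP : α → ℕ) := by
  classical
  intro u v huv
  obtain ⟨c, hc, -, le_u, hcard⟩ := exists_chain_card_eq_lenP u
  have hv : v ∉ c := fun hv => (le_u v hv).not_gt huv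
  refine Nat.lt_of_succ_le (le_csSup (bddAbove_card_chain v)
    ⟨insert v c, ?_, Finset.mem_insert_self v c, ?_, ?_⟩)
  · rw [Finset.coe_insert]
    exact hc.insert fun b hb _ => Or.inr ((le_u b hb).trans huv.le)
  · rw [Finset.forall_mem_insert]
    exact ⟨le_rfl, fun x hx => (le_u x hx).trans huv.le⟩
  · rw [Finset.card_insert_of_notMem hv, hcard]

theorem Hierarchical.lt_of_lenP_lt (hα : Hierarchical α) {u v : α} (h : lenP u < lenP v) : u < v :=
  (hα u v h).lt_of_ne fun huv => h.ne (congrArg lenP huv)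

theorem Hierarchical.lenP_orderIso_apply [Finite α] (hα : Hierarchical α) {K : Set α}
    (e : K ≃o K) (i : K) : lenP (e i : α) = lenP (i : α) := by
  rcases lt_trichotomy (lenP (e i : α)) (lenP (i : α)) with h | h | h
  · have hlt : e i < e.symm (e i) := by
      rw [e.symm_apply_apply]
      exact hα.lt_of_lenP_lt h
    exact absurd hlt (not_lt_apply_of_strictMono e.symm.strictMono (e i))
  · exact h
  · exact absurd (hα.lt_of_lenP_lt h : i < e i) (not_lt_apply_of_strictMono e.strictMono i)

open Classical in
theorem monotone_ofSubtype [Finite α] {K : Set α} (hK : (∀ i, i ∈ K) ∨ Hierarchical α)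
    (e : K ≃o K) : Monotone (Equiv.Perm.ofSubtype (p := (· ∈ K)) e.toEquiv) := by
  intro i j hij
  rcases hK with hK | hα
  · rw [Equiv.Perm.ofSubtype_apply_of_mem _ (hK i), Equiv.Perm.ofSubtype_apply_of_mem _ (hK j)]
    exact e.monotone hij
  · have lenP_eq (k : α) : lenP (Equiv.Perm.ofSubtype (p := (· ∈ K)) e.toEquiv k) = lenP k := by
      by_cases hk : k ∈ K
      · rw [Equiv.Perm.ofSubtype_apply_of_mem _ hk]
        exact hα.lenP_orderIso_apply e ⟨k, hk⟩
      · rw [Equiv.Perm.ofSubtype_apply_of_not_mem _ hk]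
    rcases hij.eq_or_lt with rfl | hlt
    · exact le_rfl
    · refine hα _ _ ?_
      rw [lenP_eq, lenP_eq]
      exact lenP_strictMono hlt

theorem exists_orderIso_extending [Finite α] {K : Set α} (hK : (∀ i, i ∈ K) ∨ Hierarchical α)
    (e : K ≃o K) : ∃ μ : α ≃o α, (∀ i ∉ K, μ i = i) ∧ ∀ i : K, μ i = e i := by
  classical
  have symm_eq : (Equiv.Perm.ofSubtype (p := (· ∈ K)) e.toEquiv).symm =
      Equiv.Perm.ofSubtype (p := (· ∈ K)) e.symm.toEquiv :=
    (map_inv Equiv.Perm.ofSubtype e.toEquiv).symm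
  exact ⟨Equiv.toOrderIso _ (monotone_ofSubtype hK e) (symm_eq ▸ monotone_ofSubtype hK e.symm),
    fun _ hi => Equiv.Perm.ofSubtype_apply_of_not_mem _ hi,
    fun i => Equiv.Perm.ofSubtype_apply_coe _ i⟩

end Order

section Weight

variable {Ω Y : Type*} [PartialOrder Ω] {r : Y → Y → Prop} {ϖ : Set Ω → Y}

/-- A weight on the subsets of a poset satisfying the axioms (3.1)–(3.3) with respect to an
antisymmetric relation `r`. -/
structure IsIdealWeight (r : Y → Y → Prop) (ϖ : Set Ω → Y) : Prop where
  antisymm : ∀ a b, r a b → r b a → a = b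
  eq_idl : ∀ B, ϖ B = ϖ (idl B)
  mono : ∀ I J, IsIdl I → IsIdl J → I ⊆ J → r (ϖ I) (ϖ J)
  eq_idl_singleton : ∀ I, IsIdl I → ∀ u ∈ I, ϖ I = ϖ {u} → I = idl {u}

namespace IsIdealWeight

theorem singleton_rel (hϖ : IsIdealWeight r ϖ) {B : Set Ω} {u : Ω} (hu : u ∈ B) :
    r (ϖ {u}) (ϖ B) := by
  rw [hϖ.eq_idl {u}, hϖ.eq_idl B]
  exact hϖ.mono _ _ (isIdl_idl _) (isIdl_idl _) (idl_mono (Set.singleton_subset_iff.2 hu))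

theorem eq_of_isGreatest (hϖ : IsIdealWeight r ϖ) {B : Set Ω} {u : Ω} (hu : IsGreatest B u) :
    ϖ B = ϖ {u} := by
  rw [hϖ.eq_idl B, idl_eq_idl_singleton_iff.2 hu, ← hϖ.eq_idl]

theorem isGreatest_of_eq (hϖ : IsIdealWeight r ϖ) {B : Set Ω} {u : Ω} (hu : u ∈ idl B)
    (h : ϖ B = ϖ {u}) : IsGreatest B u :=
  idl_eq_idl_singleton_iff.1 <|
    hϖ.eq_idl_singleton _ (isIdl_idl B) u hu ((hϖ.eq_idl B).symm.trans h)

theorem eq_of_le (hϖ : IsIdealWeight r ϖ) {i j : Ω} (hij : i ≤ j) (h : ϖ {i} = ϖ {j}) : i = j :=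
  (hϖ.isGreatest_of_eq (B := {j}) ⟨j, rfl, hij⟩ h.symm).1

theorem singleton_eq_of_mem_of_mem (hϖ : IsIdealWeight r ϖ) {B C : Set Ω} {i j : Ω}
    (hB : ϖ B = ϖ {i}) (hC : ϖ C = ϖ {j}) (hj : j ∈ B) (hi : i ∈ C) : ϖ {i} = ϖ {j} :=
  hϖ.antisymm _ _ (hC ▸ hϖ.singleton_rel hi) (hB ▸ hϖ.singleton_rel hj)

end IsIdealWeight

end Weight

section Support

variable {Ω : Type*} {H : Ω → Type*}

theorem mem_hsupp [∀ i, Zero (H i)] {α : ∀ i, H i} {i : Ω} : i ∈ hsupp α ↔ α i ≠ 0 := Iff.rfl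

theorem notMem_hsupp [∀ i, Zero (H i)] {α : ∀ i, H i} {i : Ω} : i ∉ hsupp α ↔ α i = 0 := not_not

theorem hsupp_subset_Kset [∀ i, Zero (H i)] (α : ∀ i, H i) : hsupp α ⊆ Kset H :=
  fun i hi => ⟨α i, hi⟩

theorem exists_hsupp_eq [∀ i, Zero (H i)] {I : Set Ω} (hI : I ⊆ Kset H) :
    ∃ α : ∀ i, H i, hsupp α = I := by
  classical
  have coordinate (i : Ω) : ∃ x : H i, x ≠ 0 ↔ i ∈ I := by
    by_cases hi : i ∈ I
    · obtain ⟨x, hx⟩ := hI hi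
      exact ⟨x, iff_of_true hx hi⟩
    · exact ⟨0, iff_of_false (not_not_intro rfl) hi⟩
  choose α hα using coordinate
  exact ⟨α, Set.ext hα⟩

theorem hsupp_single_subset [DecidableEq Ω] [∀ i, Zero (H i)] (i : Ω) (a : H i) :
    hsupp (Pi.single i a) ⊆ {i} := fun _ hk =>
  by_contra fun hki => hk (Pi.single_eq_of_ne hki a)

theorem isGreatest_hsupp_single [DecidableEq Ω] [PartialOrder Ω] [∀ i, Zero (H i)] {i : Ω}
    {a : H i} (ha : a ≠ 0) : IsGreatest (hsupp (Pi.single i a)) i :=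
  ⟨by rwa [mem_hsupp, Pi.single_eq_same], fun _ hk => (hsupp_single_subset i a hk).le⟩

theorem mem_hsupp_add_of_notMem_right [∀ i, AddZeroClass (H i)] {α β : ∀ i, H i} {k : Ω}
    (hα : k ∈ hsupp α) (hβ : k ∉ hsupp β) : k ∈ hsupp (α + β) := by
  rwa [mem_hsupp, Pi.add_apply, notMem_hsupp.1 hβ, add_zero]

theorem mem_hsupp_add_of_notMem_left [∀ i, AddZeroClass (H i)] {α β : ∀ i, H i} {k : Ω}
    (hα : k ∉ hsupp α) (hβ : k ∈ hsupp β) : k ∈ hsupp (α + β) := by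
  rwa [mem_hsupp, Pi.add_apply, notMem_hsupp.1 hα, zero_add]

theorem isGreatest_hsupp_single_add_single [DecidableEq Ω] [PartialOrder Ω]
    [∀ i, AddZeroClass (H i)] {i j : Ω} (hij : i < j) (a : H i) {b : H j} (hb : b ≠ 0) :
    IsGreatest (hsupp (Pi.single i a + Pi.single j b)) j := by
  refine ⟨mem_hsupp_add_of_notMem_left (fun hj => hij.ne' (hsupp_single_subset i a hj))
    (isGreatest_hsupp_single hb).1, fun k hk => by_contra fun hkj => ?_⟩
  have hk_i : k ∈ hsupp (Pi.single i a) := by_contra fun hki =>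
    hk (by rw [Pi.add_apply, notMem_hsupp.1 hki, zero_add, Pi.single_eq_of_ne (fun h => hkj h.le)])
  exact hkj ((hsupp_single_subset i a hk_i).trans_le hij.le)

theorem exists_linearEquiv_hsupp_eq_image {Ω' S : Type*} [Semiring S] {H' : Ω' → Type*}
    [∀ i, AddCommMonoid (H i)] [∀ i, Module S (H i)] [∀ k, AddCommMonoid (H' k)]
    [∀ k, Module S (H' k)] (μ : Ω ≃ Ω') (e : ∀ i, H i ≃ₗ[S] H' (μ i)) :
    ∃ φ : (∀ i, H i) ≃ₗ[S] (∀ k, H' k), ∀ α, hsupp (φ α) = μ '' hsupp α := by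
  let φ := (LinearEquiv.piCongrRight e).trans (LinearEquiv.piCongrLeft S H' μ)
  have φ_apply (α : ∀ i, H i) (i : Ω) : φ α (μ i) = e i (α i) :=
    Equiv.piCongrLeft_apply_apply H' μ (fun i => e i (α i)) i
  refine ⟨φ, fun α => Set.ext fun k => ?_⟩
  obtain ⟨i, rfl⟩ := μ.surjective k
  simp [hsupp, φ_apply]

end Support

section Leading

variable {Ω Ω' : Type*} {H : Ω → Type*} {H' : Ω' → Type*} [PartialOrder Ω] [PartialOrder Ω']

/-- `Induces f μ` says that the order isomorphism `μ` describes the effect of `f` on the ideals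
generated by supports; `ζ φ` is the `μ` induced by `φ`. -/
def Induces [∀ i, Zero (H i)] [∀ k, Zero (H' k)] (f : (∀ i, H i) → ∀ k, H' k) (μ : Ω ≃o Ω') :
    Prop :=
  ∀ α, idl (hsupp (f α)) = μ '' idl (hsupp α)

/-- `IsLeading f i j` says that `j` is the leading (that is, greatest) coordinate of the image under
`f` of every nonzero vector concentrated at `i`. It holds for all `j` when `H i` is zero. -/
def IsLeading [DecidableEq Ω] [∀ i, Zero (H i)] [∀ k, Zero (H' k)]
    (f : (∀ i, H i) → ∀ k, H' k) (i : Ω) (j : Ω') : Prop :=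
  ∀ a : H i, a ≠ 0 → IsGreatest (hsupp (f (Pi.single i a))) j

omit [PartialOrder Ω] in
theorem IsLeading.unique [DecidableEq Ω] [∀ i, Zero (H i)] [∀ k, Zero (H' k)]
    {f : (∀ i, H i) → ∀ k, H' k} {i : Ω} {j j' : Ω'} (hi : i ∈ Kset H) (h : IsLeading f i j)
    (h' : IsLeading f i j') : j = j' :=
  let ⟨a, ha⟩ := hi
  (h a ha).unique (h' a ha)

variable [∀ i, AddCommGroup (H i)] [∀ k, AddCommGroup (H' k)]
  {F : Type*} [FunLike F (∀ i, H i) (∀ k, H' k)] [AddMonoidHomClass F (∀ i, H i) (∀ k, H' k)]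

omit [PartialOrder Ω] [PartialOrder Ω'] in
theorem exists_mem_hsupp_map_single [Finite Ω] [DecidableEq Ω] {f : F} {α : ∀ i, H i} {k : Ω'}
    (hk : k ∈ hsupp (f α)) : ∃ i ∈ hsupp α, k ∈ hsupp (f (Pi.single i (α i))) := by
  cases nonempty_fintype Ω
  have sum_ne_zero : ∑ i, f (Pi.single i (α i)) k ≠ 0 := by
    rwa [← Finset.sum_apply, ← map_sum, Finset.univ_sum_single]
  obtain ⟨i, -, hi⟩ := Finset.exists_ne_zero_of_sum_ne_zero sum_ne_zero
  refine ⟨i, fun hαi => hi ?_, hi⟩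
  rw [hαi, Pi.single_zero, map_zero, Pi.zero_apply]

theorem map_apply_eq_map_single_apply [Finite Ω] [DecidableEq Ω] {f : F} {μ : Ω ≃o Ω'}
    (hf : ∀ i, IsLeading f i (μ i)) {α : ∀ i, H i} {i : Ω} (hi : ∀ k ∈ hsupp α, ¬ i < k) :
    f α (μ i) = f (Pi.single i (α i)) (μ i) := by
  rw [← sub_eq_zero, ← Pi.sub_apply, ← map_sub]
  by_contra hne
  obtain ⟨k, hk, hk'⟩ := exists_mem_hsupp_map_single hne
  have hik : i ≤ k := μ.le_iff_le.1 ((hf k _ hk).2 hk')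
  rcases hik.eq_or_lt with rfl | hlt
  · exact hk (by simp)
  · refine hi k (fun hαk => hk ?_) hlt
    rw [Pi.sub_apply, hαk, Pi.single_eq_of_ne hlt.ne', sub_zero]

theorem induces_of_isLeading [Finite Ω] [DecidableEq Ω] {f : F} {μ : Ω ≃o Ω'}
    (hf : ∀ i, IsLeading f i (μ i)) : Induces f μ := by
  intro α
  rw [← idl_image]
  ext x
  constructor
  · rintro ⟨k, hk, hxk⟩
    obtain ⟨i, hi, hik⟩ := exists_mem_hsupp_map_single hk
    exact ⟨μ i, ⟨i, hi, rfl⟩, hxk.trans ((hf i _ hi).2 hik)⟩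
  · rintro ⟨_, ⟨i, hi, rfl⟩, hxi⟩
    obtain ⟨t, hit, ht⟩ := (Set.toFinite (hsupp α)).exists_le_maximal hi
    refine ⟨μ t, ?_, hxi.trans (μ.monotone hit)⟩
    have h_eq := map_apply_eq_map_single_apply hf fun k hk => ht.not_gt hk
    exact h_eq.trans_ne (hf t _ ht.prop).1

theorem nonempty_linearEquiv_of_isLeading [Finite Ω] [DecidableEq Ω] {S : Type*} [Semiring S]
    [∀ i, Module S (H i)] [∀ k, Module S (H' k)] {φ : (∀ i, H i) ≃ₗ[S] (∀ k, H' k)} {μ : Ω ≃o Ω'}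
    (hφ : ∀ i, IsLeading φ i (μ i)) (i : Ω) : Nonempty (H i ≃ₗ[S] H' (μ i)) := by
  let f : H i →ₗ[S] H' (μ i) :=
    LinearMap.proj (μ i) ∘ₗ φ.toLinearMap ∘ₗ LinearMap.single S H i
  refine ⟨LinearEquiv.ofBijective f ⟨?_, fun b => ?_⟩⟩
  · rw [injective_iff_map_eq_zero]
    exact fun a ha => by_contra fun ha' => (hφ i a ha').1 ha
  · classical
    let γ := φ.symm (Pi.single (μ i) b)
    have φγ : φ γ = Pi.single (μ i) b := φ.apply_symm_apply _
    have le_i : ∀ k ∈ hsupp γ, k ≤ i := by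
      intro k hk
      have hμk : μ k ∈ idl (hsupp (φ γ)) :=
        induces_of_isLeading hφ γ ▸ Set.mem_image_of_mem μ (subset_idl _ hk)
      rw [φγ] at hμk
      obtain ⟨l, hl, hkl⟩ := hμk
      obtain rfl : l = μ i := hsupp_single_subset _ _ hl
      exact μ.le_iff_le.1 hkl
    refine ⟨γ i, ?_⟩
    calc f (γ i) = φ γ (μ i) :=
          (map_apply_eq_map_single_apply hφ fun k hk => (le_i k hk).not_gt).symm
      _ = b := by rw [φγ, Pi.single_eq_same]

end Leading

section Automorphism

variable {Ω S Y : Type*} [PartialOrder Ω] [Ring S] {H : Ω → Type*} [∀ i, AddCommGroup (H i)]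
  [∀ i, Module S (H i)] {r : Y → Y → Prop} {ϖ : Set Ω → Y} {φ : (∀ i, H i) ≃ₗ[S] (∀ i, H i)}

namespace Gpred

omit [PartialOrder Ω] in
theorem symm (hφ : Gpred S H ϖ φ) : Gpred S H ϖ φ.symm := fun α => by
  rw [← hφ, φ.apply_symm_apply]

theorem singleton_eq_of_isGreatest (hφ : Gpred S H ϖ φ) (hϖ : IsIdealWeight r ϖ)
    {α : ∀ i, H i} {i j : Ω} (hi : IsGreatest (hsupp α) i) (hj : IsGreatest (hsupp (φ α)) j) :
    ϖ {j} = ϖ {i} := by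
  rw [← hϖ.eq_of_isGreatest hi, ← hϖ.eq_of_isGreatest hj, hφ]

variable [Finite Ω] [DecidableEq Ω]

theorem exists_isGreatest_map (hφ : Gpred S H ϖ φ) (hϖ : IsIdealWeight r ϖ) {α : ∀ i, H i} {i : Ω}
    (hi : IsGreatest (hsupp α) i) : ∃ j, IsGreatest (hsupp (φ α)) j ∧
      IsGreatest (hsupp (φ.symm (Pi.single j (φ α j)))) i := by
  have hi' : i ∈ hsupp (φ.symm (φ α)) := by
    rw [φ.symm_apply_apply]
    exact hi.1
  obtain ⟨j, hj, hij⟩ := exists_mem_hsupp_map_single hi'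
  have weight_α : ϖ (hsupp (φ α)) = ϖ {i} := by rw [hφ, hϖ.eq_of_isGreatest hi]
  have weight_j : ϖ (hsupp (φ.symm (Pi.single j (φ α j)))) = ϖ {j} := by
    rw [hφ.symm, hϖ.eq_of_isGreatest (isGreatest_hsupp_single hj)]
  have hϖij := hϖ.singleton_eq_of_mem_of_mem weight_α weight_j hj hij
  exact ⟨j, hϖ.isGreatest_of_eq (subset_idl _ hj) (weight_α.trans hϖij),
    hϖ.isGreatest_of_eq (subset_idl _ hij) (weight_j.trans hϖij.symm)⟩

theorem isLeading_of_isGreatest (hφ : Gpred S H ϖ φ) (hϖ : IsIdealWeight r ϖ) {i j : Ω} {a : H i}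
    (ha : a ≠ 0) (hj : IsGreatest (hsupp (φ (Pi.single i a))) j) : IsLeading φ i j := by
  intro b hb
  obtain ⟨j', hj', -⟩ := hφ.exists_isGreatest_map hϖ (isGreatest_hsupp_single hb)
  suffices j' = j from this ▸ hj'
  have weight_j := hφ.singleton_eq_of_isGreatest hϖ (isGreatest_hsupp_single ha) hj
  have weight_j' := hφ.singleton_eq_of_isGreatest hϖ (isGreatest_hsupp_single hb) hj'
  by_contra hne
  have j_notMem : j ∉ hsupp (φ (Pi.single i b)) := fun h =>
    hne (hϖ.eq_of_le (hj'.2 h) (weight_j.trans weight_j'.symm)).symm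
  have j'_notMem : j' ∉ hsupp (φ (Pi.single i a)) := fun h =>
    hne (hϖ.eq_of_le (hj.2 h) (weight_j'.trans weight_j.symm))
  have map_add_single : φ (Pi.single i (a + b)) = φ (Pi.single i a) + φ (Pi.single i b) := by
    rw [Pi.single_add, map_add]
  have j_mem : j ∈ hsupp (φ (Pi.single i (a + b))) :=
    map_add_single ▸ mem_hsupp_add_of_notMem_right hj.1 j_notMem
  have j'_mem : j' ∈ hsupp (φ (Pi.single i (a + b))) :=
    map_add_single ▸ mem_hsupp_add_of_notMem_left j'_notMem hj'.1
  have hab : a + b ≠ 0 := by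
    intro hab
    rw [hab, Pi.single_zero, map_zero] at j_mem
    exact j_mem rfl
  obtain ⟨k, hk, -⟩ := hφ.exists_isGreatest_map hϖ (isGreatest_hsupp_single hab)
  have weight_k := hφ.singleton_eq_of_isGreatest hϖ (isGreatest_hsupp_single hab) hk
  exact hne ((hϖ.eq_of_le (hk.2 j'_mem) (weight_j'.trans weight_k.symm)).trans
    (hϖ.eq_of_le (hk.2 j_mem) (weight_j.trans weight_k.symm)).symm)

theorem exists_isLeading (hφ : Gpred S H ϖ φ) (hϖ : IsIdealWeight r ϖ) (i : Kset H) :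
    ∃ j : Kset H, IsLeading φ i j ∧ IsLeading φ.symm j i := by
  obtain ⟨a, ha⟩ := i.2
  obtain ⟨j, hj, hi⟩ := hφ.exists_isGreatest_map hϖ (isGreatest_hsupp_single ha)
  exact ⟨⟨j, hsupp_subset_Kset _ hj.1⟩, hφ.isLeading_of_isGreatest hϖ ha hj,
    hφ.symm.isLeading_of_isGreatest hϖ hj.1 hi⟩

theorem isLeading_le_of_le (hφ : Gpred S H ϖ φ) (hϖ : IsIdealWeight r ϖ) {i i' j j' : Ω}
    (hi : i ∈ Kset H) (hi' : i' ∈ Kset H) (hj : IsLeading φ i j) (hj' : IsLeading φ i' j')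
    (hii' : i ≤ i') : j ≤ j' := by
  rcases hii'.eq_or_lt with rfl | hlt
  · exact (hj.unique hi hj').le
  obtain ⟨a, ha⟩ := hi
  obtain ⟨b, hb⟩ := hi'
  have hsum := isGreatest_hsupp_single_add_single hlt a hb
  obtain ⟨k, hk, -⟩ := hφ.exists_isGreatest_map hϖ hsum
  have weight_k : ϖ {k} = ϖ {i'} := hφ.singleton_eq_of_isGreatest hϖ hsum hk
  have weight_j' : ϖ {j'} = ϖ {i'} :=
    hφ.singleton_eq_of_isGreatest hϖ (isGreatest_hsupp_single hb) (hj' b hb)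
  rw [map_add] at hk
  by_cases j_mem : j ∈ hsupp (φ (Pi.single i' b))
  · exact (hj' b hb).2 j_mem
  have hjk : j ≤ k := hk.2 (mem_hsupp_add_of_notMem_right (hj a ha).1 j_mem)
  have hj'k : j' ≤ k := by
    by_cases j'_mem : j' ∈ hsupp (φ (Pi.single i a))
    · exact ((hj a ha).2 j'_mem).trans hjk
    · exact hk.2 (mem_hsupp_add_of_notMem_left j'_mem (hj' b hb).1)
  rwa [hϖ.eq_of_le hj'k (weight_j'.trans weight_k.symm)]

theorem exists_orderIso_Kset_isLeading (hφ : Gpred S H ϖ φ) (hϖ : IsIdealWeight r ϖ) :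
    ∃ e : Kset H ≃o Kset H, ∀ i : Kset H, IsLeading φ i (e i) := by
  choose m hm hm' using hφ.exists_isLeading hϖ
  choose n hn hn' using hφ.symm.exists_isLeading hϖ
  let e : Kset H ≃ Kset H :=
    { toFun := m
      invFun := n
      left_inv := fun i => Subtype.ext ((hn (m i)).unique (m i).2 (hm' i))
      right_inv := fun i => Subtype.ext ((hm (n i)).unique (n i).2 (hn' i)) }
  exact ⟨e.toOrderIso
    (fun i i' => hφ.isLeading_le_of_le hϖ i.2 i'.2 (hm i) (hm i'))
    (fun j j' => hφ.symm.isLeading_le_of_le hϖ j.2 j'.2 (hn j) (hn j')), hm⟩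

theorem exists_orderIso_isLeading (hφ : Gpred S H ϖ φ) (hϖ : IsIdealWeight r ϖ)
    (hK : (∀ i, i ∈ Kset H) ∨ Hierarchical Ω) :
    ∃ μ : Ω ≃o Ω, (∀ i ∉ Kset H, μ i = i) ∧ ∀ i, IsLeading φ i (μ i) := by
  obtain ⟨e, he⟩ := hφ.exists_orderIso_Kset_isLeading hϖ
  obtain ⟨μ, μ_fix, μ_eq⟩ := exists_orderIso_extending hK e
  refine ⟨μ, μ_fix, fun i a ha => ?_⟩
  rw [μ_eq ⟨i, a, ha⟩]
  exact he ⟨i, a, ha⟩ a ha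

omit [DecidableEq Ω] in
theorem exists_induces (hφ : Gpred S H ϖ φ) (hϖ : IsIdealWeight r ϖ)
    (hK : (∀ i, i ∈ Kset H) ∨ Hierarchical Ω) :
    ∃ μ : {μ : Ω ≃o Ω // Tpred S H ϖ μ}, Induces φ μ.1 := by
  classical
  obtain ⟨μ, μ_fix, hμ⟩ := hφ.exists_orderIso_isLeading hϖ hK
  have φ_induces : Induces φ μ := induces_of_isLeading hμ
  refine ⟨⟨μ, μ_fix, fun I hI => ?_, nonempty_linearEquiv_of_isLeading hμ⟩, φ_induces⟩
  obtain ⟨α, rfl⟩ := exists_hsupp_eq hI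
  rw [hϖ.eq_idl, idl_image, ← φ_induces, ← hϖ.eq_idl, hφ]

end Gpred

theorem Tpred.exists_induces {μ : Ω ≃o Ω} (hμ : Tpred S H ϖ μ) :
    ∃ φ : {φ : (∀ i, H i) ≃ₗ[S] (∀ i, H i) // Gpred S H ϖ φ}, Induces φ.1 μ := by
  obtain ⟨-, weight_image, iso⟩ := hμ
  obtain ⟨φ, hφ⟩ := exists_linearEquiv_hsupp_eq_image μ.toEquiv fun i => (iso i).some
  replace hφ (α : ∀ i, H i) : hsupp (φ α) = μ '' hsupp α := hφ α
  refine ⟨⟨φ, fun α => ?_⟩, fun α => ?_⟩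
  · rw [hφ, weight_image _ (hsupp_subset_Kset α)]
  · rw [hφ, idl_image]

end Automorphism

namespace Induces

variable {Ω : Type*} [PartialOrder Ω] {H : Ω → Type*} [∀ i, Zero (H i)]
  {f g : (∀ i, H i) → ∀ i, H i} {μ ν : Ω ≃o Ω}

theorem comp (hf : Induces f μ) (hg : Induces g ν) : Induces (f ∘ g) (ν.trans μ) := fun α => by
  rw [Function.comp_apply, hf, hg, ← Set.image_comp]
  rfl

theorem refl_iff :
    Induces f (OrderIso.refl Ω) ↔ ∀ α, idl (hsupp (f α)) = idl (hsupp α) := by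
  simp only [Induces, OrderIso.coe_refl, Set.image_id]

theorem unique (hfμ : Induces f μ) (hfν : Induces f ν) (hμ : ∀ i ∉ Kset H, μ i = i)
    (hν : ∀ i ∉ Kset H, ν i = i) : μ = ν := by
  ext i
  by_cases hi : i ∈ Kset H
  · obtain ⟨α, hα⟩ := exists_hsupp_eq (Set.singleton_subset_iff.2 hi)
    have image_eq : μ '' idl {i} = ν '' idl {i} := by rw [← hα, ← hfμ, hfν]
    rw [← idl_image, ← idl_image, Set.image_singleton, Set.image_singleton,
      idl_eq_idl_singleton_iff] at image_eq
    exact (Set.mem_singleton_iff.1 image_eq.1).symm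
  · rw [hμ i hi, hν i hi]

end Induces

theorem stmt3 {Ω : Type*} [Fintype Ω] [Nonempty Ω] [PartialOrder Ω]
    {S : Type*} [Ring S] {H : Ω → Type*} [∀ i, AddCommGroup (H i)] [∀ i, Module S (H i)]
    {Y : Type*} (r : Y → Y → Prop) (hr : ∀ a b : Y, r a b → r b a → a = b)
    (ϖ : Set Ω → Y)
    (h31 : ∀ B : Set Ω, ϖ B = ϖ (idl B))
    (h32 : ∀ I J : Set Ω, IsIdl I → IsIdl J → I ⊆ J → r (ϖ I) (ϖ J))
    (h33 : ∀ I : Set Ω, IsIdl I → ∀ u ∈ I, ϖ I = ϖ {u} → I = idl {u})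
    (hassum : (∀ i : Ω, ∃ x : H i, x ≠ 0) ∨ Hierarchical Ω) :
    ∃ ζ : {φ : (∀ i, H i) ≃ₗ[S] (∀ i, H i) // Gpred S H ϖ φ} → {μ : Ω ≃o Ω // Tpred S H ϖ μ},
      -- defining property of ζ
      (∀ φ, ∀ α : ∀ i, H i, idl (hsupp (φ.1 α)) = (ζ φ).1 '' idl (hsupp α)) ∧
      -- ζ is unique with this property
      (∀ ζ' : {φ : (∀ i, H i) ≃ₗ[S] (∀ i, H i) // Gpred S H ϖ φ} →
          {μ : Ω ≃o Ω // Tpred S H ϖ μ},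
        (∀ φ, ∀ α : ∀ i, H i, idl (hsupp (φ.1 α)) = (ζ' φ).1 '' idl (hsupp α)) → ζ' = ζ) ∧
      -- ζ is a group homomorphism (with respect to composition)
      (∀ φ ψ χ : {φ : (∀ i, H i) ≃ₗ[S] (∀ i, H i) // Gpred S H ϖ φ},
        (∀ α : ∀ i, H i, χ.1 α = φ.1 (ψ.1 α)) →
          ∀ i : Ω, (ζ χ).1 i = (ζ φ).1 ((ζ ψ).1 i)) ∧
      -- ζ is surjective onto T
      (∀ μ : {μ : Ω ≃o Ω // Tpred S H ϖ μ},
        ∃ φ : {φ : (∀ i, H i) ≃ₗ[S] (∀ i, H i) // Gpred S H ϖ φ}, ζ φ = μ) ∧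
      -- the kernel of ζ is GL_P(H)
      (∀ φ : {φ : (∀ i, H i) ≃ₗ[S] (∀ i, H i) // Gpred S H ϖ φ},
        (∀ i : Ω, (ζ φ).1 i = i) ↔ GLPsupp S H φ.1) := by
  have hϖ : IsIdealWeight r ϖ := ⟨hr, h31, h32, h33⟩
  choose ζ hζ using fun φ : {φ : (∀ i, H i) ≃ₗ[S] (∀ i, H i) // Gpred S H ϖ φ} =>
    φ.2.exists_induces hϖ hassum
  have ζ_eq {φ} {μ : Ω ≃o Ω} (hμ : ∀ i ∉ Kset H, μ i = i) (h : Induces φ.1 μ) : (ζ φ).1 = μ :=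
    (hζ φ).unique h (ζ φ).2.1 hμ
  refine ⟨ζ, hζ, ?unique, ?hom, ?surjective, ?kernel⟩
  case unique =>
    exact fun ζ' hζ' => funext fun φ => Subtype.ext (ζ_eq (ζ' φ).2.1 (hζ' φ)).symm
  case hom =>
    intro φ ψ χ hχ i
    have χ_induces : Induces χ.1 ((ζ ψ).1.trans (ζ φ).1) :=
      (funext hχ : ⇑χ.1 = φ.1 ∘ ψ.1) ▸ (hζ φ).comp (hζ ψ)
    have fix_off_K (j) (hj : j ∉ Kset H) : (ζ φ).1 ((ζ ψ).1 j) = j := by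
      rw [(ζ ψ).2.1 j hj, (ζ φ).2.1 j hj]
    exact DFunLike.congr_fun (ζ_eq fix_off_K χ_induces) i
  case surjective =>
    intro μ
    obtain ⟨φ, hφ⟩ := μ.2.exists_induces
    exact ⟨φ, Subtype.ext (ζ_eq μ.2.1 hφ)⟩
  case kernel =>
    refine fun φ => ⟨fun hζφ => ?_, fun hφ i => ?_⟩
    · exact Induces.refl_iff.1 ((OrderIso.ext (funext hζφ) : (ζ φ).1 = OrderIso.refl Ω) ▸ hζ φ)
    · exact DFunLike.congr_fun (ζ_eq (fun _ _ => rfl) (Induces.refl_iff.2 hφ)) i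
end

section
/- Suppose that the poset P = (Ω, ≼) is a chain (totally ordered), and fix ω : Ω → ℝ^{>0}. Then H satisfies the MacWilliams extension property for (P, ω)-weight if and only if H satisfies Condition (A) and (H, P) satisfies Condition (B). -/
/-- The `(P,ω)`-weight of `β`. -/
noncomputable def wtw {Ω : Type*} [PartialOrder Ω] {H : Ω → Type*} [∀ i, Zero (H i)]
    (ω : Ω → ℝ) (β : ∀ i, H i) : ℝ :=
  ∑ᶠ i ∈ idl (hsupp β), ω i

def CondA (S : Type*) [Ring S] {Ω : Type*} (H : Ω → Type*)
    [∀ i, AddCommGroup (H i)] [∀ i, Module S (H i)] : Prop :=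
  ∀ i : Ω, ∀ B : Submodule S (H i), ∀ h : B →ₗ[S] H i, Function.Injective h →
    ∃ τ : H i ≃ₗ[S] H i, ∀ b : B, τ b = h b

def CondB (S : Type*) [Ring S] {Ω : Type*} [PartialOrder Ω] (H : Ω → Type*)
    [∀ i, AddCommGroup (H i)] [∀ i, Module S (H i)] : Prop :=
  ∀ k l : Ω, k ≤ l → k ≠ l →
    ∀ A : Submodule S (H l), ∀ f : A →ₗ[S] H k, ∃ g : H l →ₗ[S] H k, ∀ a : A, g a = f a

/-- The MacWilliams extension property for `(P,ω)`-weight. -/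
def MEPweight (S : Type*) [Ring S] {Ω : Type*} [PartialOrder Ω] (H : Ω → Type*)
    [∀ i, AddCommGroup (H i)] [∀ i, Module S (H i)] (ω : Ω → ℝ) : Prop :=
  ∀ C : Submodule S (∀ i, H i), ∀ f : C →ₗ[S] (∀ i, H i),
    (∀ x : C, wtw ω (f x) = wtw ω (x : ∀ i, H i)) →
    ∃ φ : (∀ i, H i) ≃ₗ[S] (∀ i, H i),
      (∀ α : ∀ i, H i, wtw ω (φ α) = wtw ω α) ∧ ∀ x : C, φ (x : ∀ i, H i) = f x

/-!
On a chain with positive `ω`, lower sets are linearly ordered by inclusion and the sum of `ω` is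
strictly monotone on them, so the weight of `β` determines the ideal `idl (hsupp β)`. After this
reduction the order need not be total: over every finite poset, maps preserving the ideal of the
support extend if and only if Conditions (A) and (B) hold.

The ideal of `x` omits `i` exactly when `x` vanishes at all `j ≥ i`. Hence the linear endomorphisms
of `∏ i, H i` that preserve the ideal are the upper triangular ones with injective diagonal entries.
Condition (A) is what is needed to extend diagonal entries from submodules, and Condition (B) is
what is needed to extend the entries at `i < j`.
-/

section RelativeInjectivity

variable {S : Type*} [Ring S] {D M N : Type*} [AddCommGroup D] [Module S D]
  [AddCommGroup M] [Module S M] [AddCommGroup N] [Module S N]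

/-- `M` is `N`-injective: every linear map from a submodule of `N` to `M` extends to `N`. -/
def RelInjective (S M N : Type*) [Ring S] [AddCommGroup M] [Module S M] [AddCommGroup N]
    [Module S N] : Prop :=
  ∀ (A : Submodule S N) (f : A →ₗ[S] M), ∃ g : N →ₗ[S] M, ∀ a : A, g a = f a

/-- `M` is strong pseudo-injective: every injective linear map from a submodule of `M` to `M`
extends to an automorphism of `M`. -/
def StrongPseudoInjective (S M : Type*) [Ring S] [AddCommGroup M] [Module S M] : Prop :=
  ∀ (B : Submodule S M) (h : B →ₗ[S] M), Function.Injective h →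
    ∃ τ : M ≃ₗ[S] M, ∀ b : B, τ b = h b

theorem exists_rangeRestrict_apply_eq_of_ker_le_ker {p : D →ₗ[S] N} {u : D →ₗ[S] M}
    (h : LinearMap.ker p ≤ LinearMap.ker u) :
    ∃ v : LinearMap.range p →ₗ[S] M, ∀ x, v (p.rangeRestrict x) = u x := by
  refine ⟨(LinearMap.ker p).liftQ u h ∘ₗ p.quotKerEquivRange.symm.toLinearMap, fun x => ?_⟩
  exact congrArg ((LinearMap.ker p).liftQ u h)
    (p.quotKerEquivRange_symm_apply_image x (p.mem_range_self x))

theorem RelInjective.exists_apply_eq_of_ker_le_ker (hMN : RelInjective S M N)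
    {p : D →ₗ[S] N} {u : D →ₗ[S] M} (h : LinearMap.ker p ≤ LinearMap.ker u) :
    ∃ g : N →ₗ[S] M, ∀ x, g (p x) = u x := by
  obtain ⟨v, hv⟩ := exists_rangeRestrict_apply_eq_of_ker_le_ker h
  obtain ⟨g, hg⟩ := hMN _ v
  exact ⟨g, fun x => (hg (p.rangeRestrict x)).trans (hv x)⟩

theorem RelInjective.exists_apply_eq_of_forall_mem (hMN : RelInjective S M N)
    (K : Submodule S D) {p : D →ₗ[S] N} {u : D →ₗ[S] M} (h : ∀ x ∈ K, p x = 0 → u x = 0) :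
    ∃ g : N →ₗ[S] M, ∀ x ∈ K, g (p x) = u x := by
  obtain ⟨g, hg⟩ := hMN.exists_apply_eq_of_ker_le_ker (p := p ∘ₗ K.subtype) (u := u ∘ₗ K.subtype)
    fun x hx => h x x.2 hx
  exact ⟨g, fun x hx => hg ⟨x, hx⟩⟩

theorem StrongPseudoInjective.exists_equiv_apply_eq_of_ker_eq_ker (hM : StrongPseudoInjective S M)
    {p u : D →ₗ[S] M} (h : LinearMap.ker p = LinearMap.ker u) :
    ∃ τ : M ≃ₗ[S] M, ∀ x, τ (p x) = u x := by
  obtain ⟨v, hv⟩ := exists_rangeRestrict_apply_eq_of_ker_le_ker h.le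
  have v_injective : Function.Injective v := by
    rw [injective_iff_map_eq_zero]
    rintro ⟨_, x, rfl⟩ hx
    have hux : x ∈ LinearMap.ker u := (hv x).symm.trans hx
    exact Subtype.ext (h.ge hux)
  obtain ⟨τ, hτ⟩ := hM _ v v_injective
  exact ⟨τ, fun x => (hτ (p.rangeRestrict x)).trans (hv x)⟩

theorem RelInjective.pi {ι : Type*} [Finite ι] {N : ι → Type*} [∀ i, AddCommGroup (N i)]
    [∀ i, Module S (N i)] (h : ∀ i, RelInjective S M (N i)) : RelInjective S M (∀ i, N i) := by
  intro A f
  have extend_off : ∀ s : Set ι, ∃ g : (∀ i, N i) →ₗ[S] M,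
      ∀ a : A, (∀ k ∉ s, (a : ∀ i, N i) k = 0) → g a = f a := by
    intro s
    induction s, s.toFinite using Set.Finite.induction_on with
    | empty =>
      refine ⟨0, fun a ha => ?_⟩
      obtain rfl : a = 0 := Subtype.ext (funext fun k => ha k (Set.notMem_empty k))
      simp
    | @insert j s _ _ ih =>
      obtain ⟨g, hg⟩ := ih
      -- On `D`, the error `f - g` factors through the `j`-th coordinate: where that coordinate
      -- vanishes as well, `g` already agrees with `f`.
      let D : Submodule S A := (Submodule.pi (insert j s)ᶜ fun _ => ⊥).comap A.subtype
      obtain ⟨h', hh'⟩ := (h j).exists_apply_eq_of_forall_mem D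
        (p := LinearMap.proj j ∘ₗ A.subtype) (u := f - g ∘ₗ A.subtype) fun a ha haj => by
          refine sub_eq_zero.2 (hg a fun k hk => ?_).symm
          obtain rfl | hkj := eq_or_ne k j
          · exact haj
          · exact ha k (by simp [hkj, hk])
      exact ⟨g + h' ∘ₗ LinearMap.proj j, fun a ha => eq_sub_iff_add_eq'.1 (hh' a ha)⟩
  obtain ⟨g, hg⟩ := extend_off Set.univ
  exact ⟨g, fun a => hg a fun k hk => absurd (Set.mem_univ k) hk⟩

theorem StrongPseudoInjective.exists_equiv_apply_add_apply_eq (hM : StrongPseudoInjective S M)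
    (hMN : RelInjective S M N) {p u : D →ₗ[S] M} {q : D →ₗ[S] N}
    (h : ∀ x, q x = 0 → (p x = 0 ↔ u x = 0)) :
    ∃ (τ : M ≃ₗ[S] M) (g : N →ₗ[S] M), ∀ x, τ (p x) + g (q x) = u x := by
  obtain ⟨τ, hτ⟩ := hM.exists_equiv_apply_eq_of_ker_eq_ker
    (p := p ∘ₗ (LinearMap.ker q).subtype) (u := u ∘ₗ (LinearMap.ker q).subtype)
    (Submodule.ext fun x => h x x.2)
  obtain ⟨g, hg⟩ := hMN.exists_apply_eq_of_ker_le_ker (p := q) (u := u - τ.toLinearMap ∘ₗ p)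
    fun x hx => sub_eq_zero.2 (hτ ⟨x, hx⟩).symm
  exact ⟨τ, g, fun x => eq_sub_iff_add_eq'.1 (hg x)⟩

end RelativeInjectivity

theorem strictMono_finsum_mem {ι M : Type*} [Finite ι] [AddCommMonoid M] [PartialOrder M]
    [IsOrderedCancelAddMonoid M] {ω : ι → M} (hω : ∀ i, 0 < ω i) :
    StrictMono fun s : Set ι => ∑ᶠ i ∈ s, ω i := by
  intro s t hst
  obtain ⟨i, hit, his⟩ := Set.exists_of_ssubset hst
  simp only [finsum_mem_eq_finite_toFinset_sum ω (Set.toFinite _)]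
  exact Finset.sum_lt_sum_of_subset (Set.Finite.toFinset_mono hst.subset) (by simpa using hit)
    (by simpa using his) (hω i) fun j _ _ => (hω j).le

section SupportIdeal

variable {Ω : Type*} [PartialOrder Ω]

theorem isLowerSet_idl (B : Set Ω) : IsLowerSet (idl B) :=
  fun _ _ hba ⟨c, hc, hac⟩ => ⟨c, hc, hba.trans hac⟩

section Zero

variable {H : Ω → Type*} [∀ i, Zero (H i)] {x y : ∀ i, H i} {i : Ω}

theorem idl_hsupp_eq_of_wtw_eq [Finite Ω] (hchain : ∀ a b : Ω, a ≤ b ∨ b ≤ a) {ω : Ω → ℝ}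
    (hω : ∀ i, 0 < ω i) (h : wtw ω x = wtw ω y) : idl (hsupp x) = idl (hsupp y) := by
  let _ : LinearOrder Ω := { ‹PartialOrder Ω› with
    le_total := hchain
    toDecidableLE := Classical.decRel _ }
  rcases (isLowerSet_idl (hsupp x)).total (isLowerSet_idl (hsupp y)) with hxy | hyx
  · exact eq_of_le_of_not_lt hxy fun hlt => (strictMono_finsum_mem hω hlt).ne h
  · exact (eq_of_le_of_not_lt hyx fun hlt => (strictMono_finsum_mem hω hlt).ne' h).symm

theorem notMem_idl_hsupp : i ∉ idl (hsupp x) ↔ ∀ j, i ≤ j → x j = 0 := by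
  simp only [idl, hsupp, Set.mem_ofPred_eq, not_exists, not_and, imp_not_comm, not_not]

theorem idl_hsupp_eq_iff :
    idl (hsupp x) = idl (hsupp y) ↔
      ∀ i, (∀ j, i ≤ j → x j = 0) ↔ ∀ j, i ≤ j → y j = 0 := by
  simp only [Set.ext_iff, ← notMem_idl_hsupp, not_iff_not]

theorem forall_lt_apply_eq_zero_of_idl_hsupp_eq (h : idl (hsupp x) = idl (hsupp y))
    (hx : ∀ j, i < j → x j = 0) : ∀ j, i < j → y j = 0 := fun j hij =>
  (idl_hsupp_eq_iff.1 h j).1 (fun k hjk => hx k (hij.trans_le hjk)) j le_rfl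

theorem forall_le_apply_eq_zero_iff (hx : ∀ j, i < j → x j = 0) :
    (∀ j, i ≤ j → x j = 0) ↔ x i = 0 := by
  refine ⟨fun h => h i le_rfl, fun hi j hij => ?_⟩
  rcases hij.eq_or_lt with rfl | hij
  · exact hi
  · exact hx j hij

theorem apply_eq_zero_iff_of_idl_hsupp_eq (h : idl (hsupp x) = idl (hsupp y))
    (hx : ∀ j, i < j → x j = 0) : x i = 0 ↔ y i = 0 := by
  rw [← forall_le_apply_eq_zero_iff hx, idl_hsupp_eq_iff.1 h,
    forall_le_apply_eq_zero_iff (forall_lt_apply_eq_zero_of_idl_hsupp_eq h hx)]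

end Zero

theorem idl_hsupp_single_add_single [DecidableEq Ω] {H : Ω → Type*} [∀ i, AddZeroClass (H i)]
    {k l : Ω} (hkl : k < l) {a : H l} {b : H k} (hab : a = 0 → b = 0) :
    idl (hsupp (Pi.single l a + Pi.single k b)) = idl (hsupp (Pi.single l a)) := by
  rw [idl_hsupp_eq_iff]
  intro i
  refine ⟨fun h j hij => ?_, fun h j hij => ?_⟩
  · obtain rfl | hjl := eq_or_ne j l
    · simpa [hkl.ne'] using h j hij
    · simp [hjl]
  · obtain rfl | hjk := eq_or_ne j k
    · have ha : a = 0 := by simpa using h l (hij.trans hkl.le)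
      simp [ha, hab ha]
    · simpa [hjk] using h j hij

end SupportIdeal

section Entry

variable {S : Type*} [Semiring S] {ι : Type*} [DecidableEq ι] {H : ι → Type*}
  [∀ i, AddCommMonoid (H i)] [∀ i, Module S (H i)]

/-- The `(i, j)` entry of an endomorphism of `∏ i, H i`, viewed as a matrix of linear maps. -/
def entry (φ : (∀ i, H i) →ₗ[S] ∀ i, H i) (i j : ι) : H j →ₗ[S] H i :=
  LinearMap.proj i ∘ₗ φ ∘ₗ LinearMap.single S H j

@[simp]
theorem entry_apply (φ : (∀ i, H i) →ₗ[S] ∀ i, H i) (i j : ι) (a : H j) :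
    entry φ i j a = φ (Pi.single j a) i :=
  rfl

end Entry

section Triangular

variable {S : Type*} [Ring S] {Ω : Type*} [PartialOrder Ω] {H : Ω → Type*}
  [∀ i, AddCommGroup (H i)] [∀ i, Module S (H i)]

/-- `φ` is upper triangular for `≤` with diagonal entries `τ i`. For finite `Ω` this says that the
`(i, j)` entry vanishes unless `i ≤ j`; it is phrased through vectors vanishing strictly above `i`,
because these are what the ideals `idl (hsupp x)` see. -/
def IsUpperTriangular (φ : (∀ i, H i) →ₗ[S] ∀ i, H i) (τ : ∀ i, H i →ₗ[S] H i) : Prop :=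
  ∀ (x : ∀ i, H i) (i : Ω), (∀ j, i < j → x j = 0) → φ x i = τ i (x i)

variable {φ : (∀ i, H i) →ₗ[S] ∀ i, H i} {τ : ∀ i, H i →ₗ[S] H i}

theorem isUpperTriangular_of_idl_hsupp_eq [DecidableEq Ω]
    (hφ : ∀ x, idl (hsupp (φ x)) = idl (hsupp x)) :
    IsUpperTriangular φ fun i => entry φ i i := by
  intro x i hx
  have sub_vanishes : ∀ j, i ≤ j → (x - Pi.single i (x i) : ∀ i, H i) j = 0 := by
    intro j hij
    rcases hij.eq_or_lt with rfl | hij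
    · simp
    · simp [hx j hij, hij.ne']
  have hφi := (idl_hsupp_eq_iff.1 (hφ _) i).2 sub_vanishes i le_rfl
  rw [map_sub] at hφi
  exact sub_eq_zero.1 hφi

theorem IsUpperTriangular.idl_hsupp_eq [WellFoundedGT Ω] (h : IsUpperTriangular φ τ)
    (hτ : ∀ i, Function.Injective (τ i)) (x : ∀ i, H i) :
    idl (hsupp (φ x)) = idl (hsupp x) := by
  rw [idl_hsupp_eq_iff]
  refine fun i => ⟨fun hφx j => ?_, fun hx j hij => ?_⟩
  · induction j using WellFoundedGT.induction with
    | ind j ih =>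
      intro hij
      refine (map_eq_zero_iff _ (hτ j)).1 ?_
      rw [← h x j fun k hjk => ih k hjk (hij.trans hjk.le), hφx j hij]
  · rw [h x j fun k hjk => hx k (hij.trans hjk.le), hx j hij, map_zero]

theorem injective_of_idl_hsupp_eq (hφ : ∀ x, idl (hsupp (φ x)) = idl (hsupp x)) :
    Function.Injective φ := by
  rw [injective_iff_map_eq_zero]
  intro x hx
  funext i
  exact (idl_hsupp_eq_iff.1 (hφ x) i).1 (fun j _ => congrFun hx j) i le_rfl

theorem IsUpperTriangular.surjective [Finite Ω] (h : IsUpperTriangular φ τ)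
    (hτ : ∀ i, Function.Surjective (τ i)) : Function.Surjective φ := by
  classical
  have range_single_le : ∀ i, LinearMap.range (LinearMap.single S H i) ≤ LinearMap.range φ := by
    intro i
    induction i using WellFoundedLT.induction with
    | ind i ih =>
      rintro _ ⟨a, rfl⟩
      obtain ⟨b, rfl⟩ := hτ i a
      have error_supported_below : ∀ j, ¬ j < i →
          (Pi.single i (τ i b) - φ (Pi.single i b) : ∀ i, H i) j = 0 := by
        intro j hji
        rw [Pi.sub_apply,
          h _ j fun k hjk => Pi.single_eq_of_ne (by rintro rfl; exact hji hjk) b]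
        obtain rfl | hne := eq_or_ne j i <;> simp [*]
      have error_mem : Pi.single i (τ i b) - φ (Pi.single i b) ∈ LinearMap.range φ :=
        iSup₂_le ih <| LinearMap.iInf_ker_proj_le_iSup_range_single S H (Set.toFinite (Set.Iio i))
          isCompl_compl.codisjoint
          ((Submodule.mem_iInf _).2 fun j => (Submodule.mem_iInf _).2 (error_supported_below j))
      exact (Submodule.sub_mem_iff_left _ (φ.mem_range_self _)).1 error_mem
  rw [← LinearMap.range_eq_top, eq_top_iff, ← LinearMap.iSup_range_single S H]
  exact iSup_le range_single_le

theorem bijective_entry_self_of_idl_hsupp_eq [DecidableEq Ω] (φ : (∀ i, H i) ≃ₗ[S] ∀ i, H i)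
    (hφ : ∀ x, idl (hsupp (φ x)) = idl (hsupp x)) (i : Ω) :
    Function.Bijective (entry φ.toLinearMap i i) := by
  have single_vanishes_above (a : H i) : ∀ j, i < j → (Pi.single i a : ∀ i, H i) j = 0 :=
    fun j hij => Pi.single_eq_of_ne hij.ne' a
  constructor
  · rw [injective_iff_map_eq_zero]
    intro a ha
    simpa using (apply_eq_zero_iff_of_idl_hsupp_eq (hφ _).symm (single_vanishes_above a)).2 ha
  · intro a
    obtain ⟨x, hx⟩ := φ.surjective (Pi.single i a)
    have x_vanishes_above : ∀ j, i < j → x j = 0 :=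
      forall_lt_apply_eq_zero_of_idl_hsupp_eq (hx ▸ hφ x) (single_vanishes_above a)
    refine ⟨x i, ?_⟩
    rw [← isUpperTriangular_of_idl_hsupp_eq (φ := φ.toLinearMap) hφ x i x_vanishes_above,
      LinearEquiv.coe_coe, hx, Pi.single_eq_same]

theorem exists_isUpperTriangular_extension [Finite Ω] (hA : CondA S H) (hB : CondB S H)
    {C : Submodule S (∀ i, H i)} {f : C →ₗ[S] ∀ i, H i}
    (hf : ∀ x : C, idl (hsupp (f x)) = idl (hsupp (x : ∀ i, H i))) :
    ∃ (τ : ∀ i, H i ≃ₗ[S] H i) (φ : (∀ i, H i) →ₗ[S] ∀ i, H i),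
      IsUpperTriangular φ (fun i => (τ i).toLinearMap) ∧ ∀ x : C, φ x = f x := by
  let restrictAbove (i : Ω) : (∀ j, H j) →ₗ[S] ∀ j : Set.Ioi i, H j :=
    LinearMap.pi fun j => LinearMap.proj j.1
  have row (i : Ω) : ∃ (τ : H i ≃ₗ[S] H i) (g : (∀ j : Set.Ioi i, H j) →ₗ[S] H i),
      ∀ x : C, τ ((x : ∀ i, H i) i) + g (restrictAbove i x) = f x i := by
    have strongPseudoInjective : StrongPseudoInjective S (H i) := hA i
    have relInjective : RelInjective S (H i) (∀ j : Set.Ioi i, H j) :=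
      RelInjective.pi fun j => hB i j j.2.le j.2.ne
    exact strongPseudoInjective.exists_equiv_apply_add_apply_eq relInjective
      (p := LinearMap.proj i ∘ₗ C.subtype) (q := restrictAbove i ∘ₗ C.subtype)
      (u := LinearMap.proj i ∘ₗ f) fun x hx =>
        apply_eq_zero_iff_of_idl_hsupp_eq (x := (x : ∀ i, H i)) (y := f x) (hf x).symm
          fun j hij => congrFun hx ⟨j, hij⟩
  choose τ g hτg using row
  refine ⟨τ, LinearMap.pi fun i => (τ i).toLinearMap ∘ₗ LinearMap.proj i + g i ∘ₗ restrictAbove i,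
    fun x i hx => ?_, fun x => funext fun i => hτg i x⟩
  have restrict_eq_zero : restrictAbove i x = 0 := funext fun j => hx j j.2
  simp [restrict_eq_zero]

end Triangular

section ExtensionProperty

variable {S : Type*} [Ring S] {Ω : Type*} [PartialOrder Ω] {H : Ω → Type*}
  [∀ i, AddCommGroup (H i)] [∀ i, Module S (H i)]

/-- The MacWilliams extension property for the ideal generated by the support: every linear map
from a code that preserves `idl (hsupp x)` extends to an automorphism that preserves it. -/
def MEPideal (S : Type*) [Ring S] {Ω : Type*} [PartialOrder Ω] (H : Ω → Type*)
    [∀ i, AddCommGroup (H i)] [∀ i, Module S (H i)] : Prop :=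
  ∀ (C : Submodule S (∀ i, H i)) (f : C →ₗ[S] ∀ i, H i),
    (∀ x : C, idl (hsupp (f x)) = idl (hsupp (x : ∀ i, H i))) →
    ∃ φ : (∀ i, H i) ≃ₗ[S] ∀ i, H i,
      (∀ x, idl (hsupp (φ x)) = idl (hsupp x)) ∧ ∀ x : C, φ x = f x

theorem MEPideal.exists_equiv_comp_eq (hM : MEPideal S H) {D : Type*} [AddCommGroup D]
    [Module S D] {p q : D →ₗ[S] ∀ i, H i} (hp : Function.Injective p)
    (hpq : ∀ x, idl (hsupp (q x)) = idl (hsupp (p x))) :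
    ∃ φ : (∀ i, H i) ≃ₗ[S] ∀ i, H i,
      (∀ x, idl (hsupp (φ x)) = idl (hsupp x)) ∧ ∀ x, φ (p x) = q x := by
  let e := LinearEquiv.ofInjective p hp
  obtain ⟨φ, hφ, hφq⟩ := hM (LinearMap.range p) (q ∘ₗ e.symm.toLinearMap) fun y => by
    obtain ⟨x, rfl⟩ := e.surjective y
    simpa [e] using hpq x
  exact ⟨φ, hφ, fun x => by simpa [e] using hφq (e x)⟩

theorem MEPideal.condA (hM : MEPideal S H) : CondA S H := by
  classical
  intro i B h h_injective
  obtain ⟨φ, hφ, hφh⟩ := hM.exists_equiv_comp_eq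
    (p := LinearMap.single S H i ∘ₗ B.subtype) (q := LinearMap.single S H i ∘ₗ h)
    ((Pi.single_injective i).comp B.subtype_injective) fun b => by
      refine congrArg idl (Set.ext fun j => ?_)
      obtain rfl | hj := eq_or_ne j i
      · simp [hsupp, map_eq_zero_iff h h_injective]
      · simp [hsupp, hj]
  refine ⟨LinearEquiv.ofBijective _ (bijective_entry_self_of_idl_hsupp_eq φ hφ i), fun b => ?_⟩
  simpa using congrFun (hφh b) i

theorem MEPideal.condB (hM : MEPideal S H) : CondB S H := by
  classical
  intro k l hkl hne A f
  obtain ⟨φ, -, hφf⟩ := hM.exists_equiv_comp_eq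
    (p := LinearMap.single S H l ∘ₗ A.subtype)
    (q := LinearMap.single S H l ∘ₗ A.subtype + LinearMap.single S H k ∘ₗ f)
    ((Pi.single_injective l).comp A.subtype_injective) fun a =>
      idl_hsupp_single_add_single (hkl.lt_of_ne hne) fun ha => by
        obtain rfl : a = 0 := Subtype.ext ha
        exact map_zero f
  refine ⟨entry φ.toLinearMap k l, fun a => ?_⟩
  simpa [hne] using congrFun (hφf a) k

theorem mepIdeal_of_condA_of_condB [Finite Ω] (hA : CondA S H) (hB : CondB S H) :
    MEPideal S H := by
  intro C f hf
  obtain ⟨τ, φ, φ_triangular, hφf⟩ := exists_isUpperTriangular_extension hA hB hf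
  have φ_preserves := φ_triangular.idl_hsupp_eq fun i => (τ i).injective
  have φ_bijective : Function.Bijective φ :=
    ⟨injective_of_idl_hsupp_eq φ_preserves, φ_triangular.surjective fun i => (τ i).surjective⟩
  exact ⟨LinearEquiv.ofBijective φ φ_bijective, φ_preserves, hφf⟩

theorem mepIdeal_iff_condA_and_condB [Finite Ω] : MEPideal S H ↔ CondA S H ∧ CondB S H :=
  ⟨fun hM => ⟨hM.condA, hM.condB⟩, fun ⟨hA, hB⟩ => mepIdeal_of_condA_of_condB hA hB⟩

theorem mepWeight_iff_mepIdeal {ω : Ω → ℝ}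
    (hω : ∀ x y : ∀ i, H i, wtw ω x = wtw ω y → idl (hsupp x) = idl (hsupp y)) :
    MEPweight S H ω ↔ MEPideal S H := by
  have wtw_eq_iff (x y : ∀ i, H i) : wtw ω x = wtw ω y ↔ idl (hsupp x) = idl (hsupp y) :=
    ⟨hω x y, fun h => by simp only [wtw, h]⟩
  simp only [MEPweight, MEPideal, wtw_eq_iff]

end ExtensionProperty

theorem stmt10_general {Ω : Type*} [Finite Ω] [PartialOrder Ω]
    {S : Type*} [Ring S] {H : Ω → Type*} [∀ i, AddCommGroup (H i)] [∀ i, Module S (H i)]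
    {ω : Ω → ℝ}
    (hω : ∀ x y : ∀ i, H i, wtw ω x = wtw ω y → idl (hsupp x) = idl (hsupp y)) :
    MEPweight S H ω ↔ CondA S H ∧ CondB S H :=
  (mepWeight_iff_mepIdeal hω).trans mepIdeal_iff_condA_and_condB

theorem stmt10 {Ω : Type*} [Fintype Ω] [Nonempty Ω] [PartialOrder Ω]
    {S : Type*} [Ring S] {H : Ω → Type*} [∀ i, AddCommGroup (H i)] [∀ i, Module S (H i)]
    (hchain : ∀ a b : Ω, a ≤ b ∨ b ≤ a)
    (ω : Ω → ℝ) (hω : ∀ i : Ω, 0 < ω i) :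
    MEPweight S H ω ↔ CondA S H ∧ CondB S H :=
  stmt10_general fun _ _ => idl_hsupp_eq_of_wtw_eq hchain hω
end
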